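/- Let d ≥ 1, let f : ℝ^d → ℝ be continuously differentiable with L-Lipschitz gradient, and let μ > 0. Define the ball-smoothed function f_μ(x) = E_u[f(x+μu)], where u is uniformly distributed on the closed unit Euclidean ball of ℝ^d. Then f_μ is differentiable and for every x ∈ ℝ^d, ∇f_μ(x) = E_v[(d/μ)(f(x+μv) − f(x)) v], where v is uniformly distributed on the unit sphere S^{d−1} ⊂ ℝ^d (expectation with respect to the normalized surface measure); in particular, the single-sample zeroth-order estimator (d/μ)(f(x+μv) − f(x)) v is an unbiased estimator of ∇f_μ(x). -/

import Mathlib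

open MeasureTheory Metric
open scoped ENNReal RealInnerProductSpace

/-- Uniform probability measure on the closed unit Euclidean ball of `ℝ^d`
(normalized Lebesgue measure on the ball). -/
noncomputable def ballUniform (d : ℕ) : Measure (EuclideanSpace ℝ (Fin d)) :=
  (volume (closedBall (0 : EuclideanSpace ℝ (Fin d)) 1))⁻¹ •
    volume.restrict (closedBall (0 : EuclideanSpace ℝ (Fin d)) 1)

/-- Uniform probability measure on the unit Euclidean sphere of `ℝ^d`, realized as the
pushforward of the uniform measure on the unit ball under the radial projection
`x ↦ x/‖x‖`; this coincides with the normalized surface (rotation invariant) measure. -/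
noncomputable def sphereUniform (d : ℕ) : Measure (EuclideanSpace ℝ (Fin d)) :=
  (ballUniform d).map fun x => ‖x‖⁻¹ • x

/-!
A `C¹` function vanishing on the boundary of a ball, extended by zero, is Lipschitz with compact
support, so its directional derivatives integrate to zero over the ball. For
`ψ x = (r² - ‖x‖²) g x` this reads
`r² ∫_{B_r} ∂ₑg - ∫_{B_r} ‖x‖² ∂ₑg = 2 ∫_{B_r} g x ⟪e, x⟫`.
Differentiating in `r` with polar coordinates, the two sphere terms on the left cancel and what
remains is the divergence theorem `∫_{B_r} ∇g = r ^ (d - 1) ∫_{S} g (r v) v`. For `r = 1` and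
`g u = f (x + μ u) - f x`, whose gradient is `μ ∇f (x + μ u)`, it turns the ball average of
`∇f (x + μ u)`, which is `∇f_μ x` by differentiation under the integral, into the sphere average of
the estimator; the factor `d` is the ratio of the area of the sphere to the volume of the ball.
-/

open Set Filter Topology Module
open scoped NNReal

section FrontierVanishing

theorem inter_frontier_nonempty_of_isPreconnected {X : Type*} [TopologicalSpace X] {s t : Set X}
    (ht : IsPreconnected t) (hts : (t ∩ s).Nonempty) (hts' : (t ∩ sᶜ).Nonempty) :
    (t ∩ frontier s).Nonempty := by
  by_contra h
  have hcover : t ⊆ interior s ∪ interior sᶜ := fun z hz ↦ by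
    rw [← compl_frontier_eq_union_interior]
    exact fun hzs ↦ h ⟨z, hz, hzs⟩
  have hdisj : Disjoint (interior s) (interior sᶜ) :=
    disjoint_compl_right.mono interior_subset interior_subset
  obtain ⟨x, hxt, hxs⟩ := hts
  obtain ⟨y, hyt, hys⟩ := hts'
  have hxint : x ∈ interior s := (hcover hxt).resolve_right fun hx ↦ interior_subset hx hxs
  exact hys (interior_subset
    (ht.subset_left_of_subset_union isOpen_interior isOpen_interior hdisj hcover ⟨x, hxt, hxint⟩
      hyt))

theorem lipschitzWith_indicator_of_frontier {E F : Type*} [NormedAddCommGroup E] [NormedSpace ℝ E]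
    [NormedAddCommGroup F] {s : Set E} {ψ : E → F} {K : ℝ≥0} (hs : IsClosed s)
    (hψ : LipschitzOnWith K ψ s) (hψ₀ : ∀ x ∈ frontier s, ψ x = 0) :
    LipschitzWith K (s.indicator ψ) := by
  have dist_le_of_mem_of_notMem : ∀ {x y}, x ∈ s → y ∉ s →
      dist (s.indicator ψ x) (s.indicator ψ y) ≤ K * dist x y := fun {x y} hx hy ↦ by
    obtain ⟨z, hz, hzs⟩ := inter_frontier_nonempty_of_isPreconnected
      (convex_segment x y).isPreconnected ⟨x, left_mem_segment ℝ x y, hx⟩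
      ⟨y, right_mem_segment ℝ x y, hy⟩
    calc dist (s.indicator ψ x) (s.indicator ψ y)
        = dist (ψ x) (ψ z) := by
          rw [indicator_of_mem hx, indicator_of_notMem hy, hψ₀ z hzs]
      _ ≤ K * dist x z := hψ.dist_le_mul x hx z (hs.frontier_subset hzs)
      _ ≤ K * dist x y := by
          gcongr
          linarith [dist_add_dist_of_mem_segment hz, dist_nonneg (x := z) (y := y)]
  refine LipschitzWith.of_dist_le_mul fun x y ↦ ?_
  by_cases hx : x ∈ s <;> by_cases hy : y ∈ s
  · simpa only [indicator_of_mem hx, indicator_of_mem hy] using hψ.dist_le_mul x hx y hy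
  · exact dist_le_of_mem_of_notMem hx hy
  · simpa only [dist_comm] using dist_le_of_mem_of_notMem hy hx
  · simp only [indicator_of_notMem hx, indicator_of_notMem hy, dist_self]
    positivity

theorem lineDeriv_indicator_of_notMem_frontier {E F : Type*} [NormedAddCommGroup E]
    [NormedSpace ℝ E] [NormedAddCommGroup F] [NormedSpace ℝ F] {s : Set E} {ψ : E → F}
    {x : E} (hx : x ∉ frontier s) (e : E) :
    lineDeriv ℝ (s.indicator ψ) x e = s.indicator (fun y ↦ lineDeriv ℝ ψ y e) x := by
  rcases (compl_frontier_eq_union_interior.subset hx : x ∈ interior s ∪ interior sᶜ)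
    with hxs | hxs
  · have heq : s.indicator ψ =ᶠ[𝓝 x] ψ :=
      eqOn_indicator.eventuallyEq_of_mem (mem_interior_iff_mem_nhds.1 hxs)
    rw [heq.lineDeriv_eq, indicator_of_mem (interior_subset hxs)]
  · have heq : s.indicator ψ =ᶠ[𝓝 x] fun _ ↦ 0 :=
      eqOn_indicator'.eventuallyEq_of_mem (mem_interior_iff_mem_nhds.1 hxs)
    rw [heq.lineDeriv_eq, indicator_of_notMem (interior_subset hxs)]
    simp only [lineDeriv, deriv_const]

variable {E : Type*} [NormedAddCommGroup E] [NormedSpace ℝ E] [FiniteDimensional ℝ E]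
  [MeasurableSpace E] [BorelSpace E] (μ : Measure E) [μ.IsAddHaarMeasure]

theorem integral_lineDeriv_eq_zero_of_hasCompactSupport {g : E → ℝ} {K : ℝ≥0}
    (hg : LipschitzWith K g) (hgc : HasCompactSupport g) (e : E) :
    ∫ x, lineDeriv ℝ g x e ∂μ = 0 := by
  have h := (LipschitzWith.const (1 : ℝ)).integral_lineDeriv_mul_eq (μ := μ) hg hgc (-e)
  have lineDeriv_const : ∀ x, lineDeriv ℝ (fun _ : E ↦ (1 : ℝ)) x (-e) = 0 := fun x ↦ by
    simp only [lineDeriv, deriv_const]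
  simpa [lineDeriv_const] using h.symm

theorem setIntegral_fderiv_eq_zero_of_frontier {s : Set E} (hs : IsCompact s)
    (hμs : μ (frontier s) = 0) {ψ : E → ℝ} (hψ : ContDiff ℝ 1 ψ)
    (hψ₀ : ∀ x ∈ frontier s, ψ x = 0) (e : E) :
    ∫ x in s, fderiv ℝ ψ x e ∂μ = 0 := by
  obtain ⟨K, hK⟩ := hψ.locallyLipschitz.locallyLipschitzOn.exists_lipschitzOnWith_of_compact hs
  have hlip : LipschitzWith K (s.indicator ψ) :=
    lipschitzWith_indicator_of_frontier hs.isClosed hK hψ₀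
  have hsupp : HasCompactSupport (s.indicator ψ) :=
    .intro hs fun x hx ↦ indicator_of_notMem hx ψ
  rw [← integral_indicator hs.measurableSet,
    ← integral_lineDeriv_eq_zero_of_hasCompactSupport μ hlip hsupp e]
  refine integral_congr_ae ?_
  filter_upwards [measure_eq_zero_iff_ae_notMem.1 hμs] with x hx
  rw [lineDeriv_indicator_of_notMem_frontier hx]
  simp only [(hψ.differentiable one_ne_zero _).lineDeriv_eq_fderiv]

end FrontierVanishing

section PolarCoordinates

theorem integral_volumeIoiPow {F : Type*} [NormedAddCommGroup F] [NormedSpace ℝ F] (n : ℕ)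
    (f : ℝ → F) :
    ∫ r : Ioi (0 : ℝ), f r ∂Measure.volumeIoiPow n = ∫ r in Ioi (0 : ℝ), r ^ n • f r := by
  have hmeas : Measurable fun r : Ioi (0 : ℝ) ↦ (r.1 ^ n).toNNReal :=
    (measurable_subtype_coe.pow_const n).real_toNNReal
  simp only [Measure.volumeIoiPow, ENNReal.ofReal]
  rw [integral_withDensity_eq_integral_smul hmeas,
    integral_subtype_comap measurableSet_Ioi fun r ↦ (r ^ n).toNNReal • f r]
  refine setIntegral_congr_fun measurableSet_Ioi fun r hr ↦ ?_
  simp only [NNReal.smul_def, Real.coe_toNNReal _ (pow_nonneg (mem_Ioi.1 hr).le n)]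

variable {E F : Type*} [NormedAddCommGroup E] [NormedSpace ℝ E] [FiniteDimensional ℝ E]
  [MeasurableSpace E] [BorelSpace E] (μ : Measure E) [μ.IsAddHaarMeasure]
  [NormedAddCommGroup F] [NormedSpace ℝ F]

theorem continuous_integral_toSphere_smul {h : E → F} (hh : Continuous h) :
    Continuous fun r : ℝ ↦ ∫ v, h (r • (v : E)) ∂μ.toSphere := by
  simpa using continuous_parametric_integral_of_continuous (μ := μ.toSphere)
    (f := fun (r : ℝ) v ↦ h (r • (v : E))) (by fun_prop) isCompact_univ

variable [Nontrivial E]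

theorem integral_eq_integral_Ioi_integral_toSphere {f : E → F} (hf : Integrable f μ) :
    ∫ x, f x ∂μ =
      ∫ r in Ioi (0 : ℝ), r ^ (finrank ℝ E - 1) • ∫ v, f (r • (v : E)) ∂μ.toSphere := by
  have hpolar := μ.measurePreserving_homeomorphUnitSphereProd
  have hemb := (homeomorphUnitSphereProd E).measurableEmbedding
  let g : sphere (0 : E) 1 × Ioi (0 : ℝ) → F := fun p ↦ f (p.2.1 • (p.1 : E))
  have hg : ∀ x : ({0}ᶜ : Set E), g (homeomorphUnitSphereProd E x) = f x := fun x ↦ by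
    simp only [g, ← homeomorphUnitSphereProd_symm_apply_coe, Homeomorph.symm_apply_apply]
  have hgi : Integrable g (μ.toSphere.prod (.volumeIoiPow (finrank ℝ E - 1))) := by
    rw [← hpolar.integrable_comp_emb hemb]
    simp only [Function.comp_def, hg]
    exact (integrableOn_iff_comap_subtypeVal (measurableSet_singleton 0).compl).1 hf.integrableOn
  calc ∫ x, f x ∂μ = ∫ x : ({0}ᶜ : Set E), f x ∂μ.comap (↑) := by
        rw [integral_subtype_comap (measurableSet_singleton _).compl, restrict_compl_singleton]
    _ = ∫ p, g p ∂μ.toSphere.prod (.volumeIoiPow (finrank ℝ E - 1)) := by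
        simpa only [hg] using hpolar.integral_comp hemb g
    _ = ∫ r : Ioi (0 : ℝ), ∫ v, f (r.1 • (v : E)) ∂μ.toSphere
          ∂Measure.volumeIoiPow (finrank ℝ E - 1) := integral_prod_symm g hgi
    _ = _ := integral_volumeIoiPow _ fun r ↦ ∫ v, f (r • (v : E)) ∂μ.toSphere

theorem setIntegral_closedBall_eq_intervalIntegral_toSphere {h : E → F} (hh : Continuous h)
    {r : ℝ} (hr : 0 ≤ r) :
    ∫ x in closedBall 0 r, h x ∂μ =
      ∫ s in 0..r, s ^ (finrank ℝ E - 1) • ∫ v, h (s • (v : E)) ∂μ.toSphere := by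
  have hint : Integrable ((closedBall (0 : E) r).indicator h) μ :=
    (hh.continuousOn.integrableOn_compact (isCompact_closedBall 0 r)).integrable_indicator
      measurableSet_closedBall
  rw [← integral_indicator measurableSet_closedBall,
    integral_eq_integral_Ioi_integral_toSphere μ hint, intervalIntegral.integral_of_le hr,
    ← Ioi_inter_Iic, ← setIntegral_indicator measurableSet_Iic]
  refine setIntegral_congr_fun measurableSet_Ioi fun s hs ↦ ?_
  have smul_mem_closedBall : ∀ v : sphere (0 : E) 1,
      s • (v : E) ∈ closedBall (0 : E) r ↔ s ≤ r := fun v ↦ by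
    simp [norm_smul, abs_of_pos (mem_Ioi.1 hs)]
  by_cases hsr : s ≤ r <;> simp [indicator, smul_mem_closedBall, hsr]

theorem hasDerivAt_setIntegral_closedBall [CompleteSpace F] {h : E → F} (hh : Continuous h) {r : ℝ}
    (hr : 0 < r) :
    HasDerivAt (fun s ↦ ∫ x in closedBall 0 s, h x ∂μ)
      (r ^ (finrank ℝ E - 1) • ∫ v, h (r • (v : E)) ∂μ.toSphere) r := by
  have hcont : Continuous fun s : ℝ ↦
      s ^ (finrank ℝ E - 1) • ∫ v, h (s • (v : E)) ∂μ.toSphere :=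
    (continuous_pow _).smul (continuous_integral_toSphere_smul μ hh)
  refine (intervalIntegral.integral_hasDerivAt_right (hcont.intervalIntegrable 0 r)
    (hcont.stronglyMeasurableAtFilter _ _) hcont.continuousAt).congr_of_eventuallyEq ?_
  filter_upwards [lt_mem_nhds hr] with s hs
  exact setIntegral_closedBall_eq_intervalIntegral_toSphere μ hh hs.le

end PolarCoordinates

section DivergenceTheorem

variable {E : Type*} [NormedAddCommGroup E] [InnerProductSpace ℝ E] [FiniteDimensional ℝ E]
  [MeasurableSpace E] [BorelSpace E] (μ : Measure E) [μ.IsAddHaarMeasure]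
  {g : E → ℝ}

theorem setIntegral_closedBall_fderiv_mul_sub_norm_sq (hg : ContDiff ℝ 1 g) (e : E) {r : ℝ}
    (hr : 0 < r) :
    ∫ x in closedBall 0 r, fderiv ℝ g x e * (r ^ 2 - ‖x‖ ^ 2) ∂μ =
      2 * ∫ x in closedBall 0 r, g x * ⟪e, x⟫ ∂μ := by
  have hfrontier : frontier (closedBall (0 : E) r) = sphere 0 r := frontier_closedBall 0 hr.ne'
  have hfderiv : ∀ x, fderiv ℝ (fun y ↦ g y * (r ^ 2 - ‖y‖ ^ 2)) x e =
      fderiv ℝ g x e * (r ^ 2 - ‖x‖ ^ 2) - 2 * (g x * ⟪e, x⟫) := fun x ↦ by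
    have hgx := (hg.differentiable one_ne_zero x).hasFDerivAt
    have hsq := (hasStrictFDerivAt_norm_sq x).hasFDerivAt.const_sub (r ^ 2)
    rw [(hgx.fun_mul hsq).fderiv]
    simp only [smul_neg, add_apply, neg_apply, smul_apply, coe_innerSL_apply, nsmul_eq_mul,
      Nat.cast_ofNat, smul_eq_mul, real_inner_comm e]
    ring
  have hzero : ∫ x in closedBall 0 r, fderiv ℝ (fun y ↦ g y * (r ^ 2 - ‖y‖ ^ 2)) x e ∂μ = 0 := by
    refine setIntegral_fderiv_eq_zero_of_frontier μ (isCompact_closedBall 0 r) ?_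
      (hg.mul (contDiff_const.sub (contDiff_norm_sq ℝ))) ?_ e
    · rw [hfrontier, Measure.addHaar_sphere_of_ne_zero μ 0 hr.ne']
    · rw [hfrontier]
      intro x hx
      simp [mem_sphere_zero_iff_norm.1 hx]
  have hcont : Continuous fun x ↦ fderiv ℝ g x e :=
    (hg.continuous_fderiv one_ne_zero).clm_apply continuous_const
  have integrableOn_closedBall : ∀ {h : E → ℝ}, Continuous h → IntegrableOn h (closedBall 0 r) μ :=
    fun hh ↦ hh.continuousOn.integrableOn_compact (isCompact_closedBall 0 r)
  simp only [hfderiv] at hzero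
  rwa [integral_sub (integrableOn_closedBall (hcont.fun_mul (by fun_prop)))
    (integrableOn_closedBall (by fun_prop)), integral_const_mul, sub_eq_zero] at hzero

variable [Nontrivial E]

theorem setIntegral_closedBall_fderiv_eq_integral_toSphere (hg : ContDiff ℝ 1 g) (e : E) {r : ℝ}
    (hr : 0 < r) :
    ∫ x in closedBall 0 r, fderiv ℝ g x e ∂μ =
      r ^ (finrank ℝ E - 1) * ∫ v, g (r • (v : E)) * ⟪e, (v : E)⟫ ∂μ.toSphere := by
  have hcont : Continuous fun x ↦ fderiv ℝ g x e :=
    (hg.continuous_fderiv one_ne_zero).clm_apply continuous_const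
  have hderiv := hasDerivAt_setIntegral_closedBall μ hcont hr
  have hderivSq := hasDerivAt_setIntegral_closedBall μ
    (h := fun x ↦ fderiv ℝ g x e * ‖x‖ ^ 2) (by fun_prop) hr
  have hderivInner := hasDerivAt_setIntegral_closedBall μ (h := fun x ↦ g x * ⟪e, x⟫)
    (by fun_prop) hr
  have hweighted : (fun s ↦ s ^ 2 * ∫ x in closedBall 0 s, fderiv ℝ g x e ∂μ -
      ∫ x in closedBall 0 s, fderiv ℝ g x e * ‖x‖ ^ 2 ∂μ) =ᶠ[𝓝 r]
      fun s ↦ 2 * ∫ x in closedBall 0 s, g x * ⟪e, x⟫ ∂μ := by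
    filter_upwards [lt_mem_nhds hr] with s hs
    have integrableOn_closedBall : ∀ {h : E → ℝ}, Continuous h →
        IntegrableOn h (closedBall 0 s) μ :=
      fun hh ↦ hh.continuousOn.integrableOn_compact (isCompact_closedBall 0 s)
    rw [← setIntegral_closedBall_fderiv_mul_sub_norm_sq μ hg e hs, ← integral_const_mul,
      ← integral_sub (integrableOn_closedBall (by fun_prop))
        (integrableOn_closedBall (by fun_prop))]
    congr with x
    ring
  have h := (((hasDerivAt_pow 2 r).mul hderiv).sub hderivSq).unique
    ((hderivInner.const_mul 2).congr_of_eventuallyEq hweighted)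
  have norm_smul_sphere : ∀ v : sphere (0 : E) 1, ‖r • (v : E)‖ = r := fun v ↦ by
    simp [norm_smul, abs_of_pos hr]
  simp only [norm_smul_sphere, real_inner_smul_right, mul_left_comm _ r, integral_mul_const,
    integral_const_mul, smul_eq_mul] at h
  refine mul_left_cancel₀ (mul_pos two_pos hr).ne' ?_
  linear_combination h

theorem setIntegral_closedBall_gradient_eq_integral_toSphere (hg : ContDiff ℝ 1 g) {r : ℝ}
    (hr : 0 < r) :
    ∫ x in closedBall 0 r, gradient g x ∂μ =
      r ^ (finrank ℝ E - 1) • ∫ v, g (r • (v : E)) • (v : E) ∂μ.toSphere := by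
  have hgrad : Continuous (gradient g) :=
    (InnerProductSpace.toDual ℝ E).symm.continuous.comp (hg.continuous_fderiv one_ne_zero)
  have hgradi : IntegrableOn (gradient g) (closedBall 0 r) μ :=
    hgrad.continuousOn.integrableOn_compact (isCompact_closedBall 0 r)
  have hsphere : Integrable (fun v : sphere (0 : E) 1 ↦ g (r • (v : E)) • (v : E)) μ.toSphere :=
    Continuous.integrable_of_hasCompactSupport (by fun_prop) (HasCompactSupport.of_compactSpace _)
  refine ext_inner_left ℝ fun e ↦ ?_
  rw [inner_smul_right, ← integral_inner hgradi, ← integral_inner hsphere]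
  simp only [inner_gradient_right, conj_trivial, real_inner_smul_right]
  exact setIntegral_closedBall_fderiv_eq_integral_toSphere μ hg e hr

theorem average_closedBall_gradient_eq_average_toSphere (hg : ContDiff ℝ 1 g) :
    ⨍ u in closedBall 0 1, gradient g u ∂μ =
      ⨍ v, (finrank ℝ E * g v) • (v : E) ∂μ.toSphere := by
  have hdim : (finrank ℝ E : ℝ) ≠ 0 := Nat.cast_ne_zero.2 finrank_pos.ne'
  simp only [mul_smul, average_eq, integral_smul, measureReal_restrict_apply_univ,
    setIntegral_closedBall_gradient_eq_integral_toSphere μ hg one_pos, one_pow, one_smul,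
    Measure.toSphere_real_apply_univ, Measure.addHaar_real_closedBall_eq_addHaar_real_ball]
  rw [smul_smul, mul_inv_rev, inv_mul_cancel_right₀ hdim]

end DivergenceTheorem

section UniformMeasures

open scoped Pointwise

theorem Ioo_smul_sphere_inter {E : Type*} [NormedAddCommGroup E] [NormedSpace ℝ E] (s : Set E) :
    Ioo (0 : ℝ) 1 • (sphere (0 : E) 1 ∩ s) = (ball 0 1 \ {0}) ∩ (fun x ↦ ‖x‖⁻¹ • x) ⁻¹' s := by
  ext x
  constructor
  · rintro ⟨r, hr, v, ⟨hv, hvs⟩, rfl⟩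
    have hv1 : ‖v‖ = 1 := mem_sphere_zero_iff_norm.1 hv
    have hv0 : v ≠ 0 := norm_ne_zero_iff.1 (hv1 ▸ one_ne_zero)
    simp [norm_smul, hv1, abs_of_pos hr.1, hr.2, hr.1.ne', hv0, smul_smul, hvs]
  · rintro ⟨⟨hx, hx0⟩, hxs⟩
    have hnorm : ‖x‖ ≠ 0 := norm_ne_zero_iff.2 hx0
    refine ⟨‖x‖, ⟨norm_pos_iff.2 hx0, mem_ball_zero_iff.1 hx⟩, ‖x‖⁻¹ • x, ⟨?_, hxs⟩,
      smul_inv_smul₀ hnorm x⟩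
    simp [norm_smul, hnorm]

variable {E : Type*} [NormedAddCommGroup E] [NormedSpace ℝ E] [FiniteDimensional ℝ E]
  [Nontrivial E] [MeasurableSpace E] [BorelSpace E] (μ : Measure E) [μ.IsAddHaarMeasure]

theorem ball_sdiff_zero_ae_eq_closedBall :
    (ball 0 1 \ {0} : Set E) =ᵐ[μ] closedBall 0 1 :=
  (sdiff_null_ae_eq_self (measure_singleton 0)).trans <|
    ae_eq_of_subset_of_measure_ge ball_subset_closedBall
      (μ.addHaar_closedBall_eq_addHaar_ball 0 1).le measurableSet_ball.nullMeasurableSet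
      measure_closedBall_lt_top.ne

theorem map_coe_toSphere :
    μ.toSphere.map (↑) =
      finrank ℝ E • (μ.restrict (closedBall 0 1)).map fun x ↦ ‖x‖⁻¹ • x := by
  have hmeas : Measurable fun x : E ↦ ‖x‖⁻¹ • x := measurable_norm.inv.smul measurable_id
  ext s hs
  rw [Measure.map_apply measurable_subtype_coe hs,
    μ.toSphere_apply' (measurable_subtype_coe hs), Subtype.image_preimage_coe,
    Ioo_smul_sphere_inter, Measure.smul_apply,
    ← Measure.restrict_congr_set (ball_sdiff_zero_ae_eq_closedBall μ), Measure.map_apply hmeas hs,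
    Measure.restrict_apply (hmeas hs), nsmul_eq_mul, inter_comm]

theorem map_coe_normalized_toSphere :
    ((μ.toSphere univ)⁻¹ • μ.toSphere).map (↑) =
      ((μ (closedBall 0 1))⁻¹ • μ.restrict (closedBall 0 1)).map fun x : E ↦ ‖x‖⁻¹ • x := by
  have hdim : (finrank ℝ E : ℝ≥0∞) ≠ 0 := Nat.cast_ne_zero.2 finrank_pos.ne'
  rw [Measure.map_smul, Measure.map_smul, map_coe_toSphere, μ.toSphere_apply_univ,
    ← μ.addHaar_closedBall_eq_addHaar_ball, ← Nat.cast_smul_eq_nsmul ℝ≥0∞, smul_smul,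
    ENNReal.mul_inv (.inl hdim) (.inl (ENNReal.natCast_ne_top _)), mul_right_comm,
    ENNReal.inv_mul_cancel hdim (ENNReal.natCast_ne_top _), one_mul]

variable {F : Type*} [NormedAddCommGroup F] [NormedSpace ℝ F] {d : ℕ}

theorem integral_ballUniform (f : EuclideanSpace ℝ (Fin d) → F) :
    ∫ u, f u ∂ballUniform d = ⨍ u in closedBall 0 1, f u := by
  rw [ballUniform, average, Measure.restrict_apply_univ]

theorem integral_sphereUniform [NeZero d] (f : EuclideanSpace ℝ (Fin d) → F) :
    ∫ v, f v ∂sphereUniform d =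
      ⨍ v : sphere (0 : EuclideanSpace ℝ (Fin d)) 1, f v ∂volume.toSphere := by
  rw [sphereUniform, ballUniform, ← map_coe_normalized_toSphere,
    (MeasurableEmbedding.subtype_coe isClosed_sphere.measurableSet).integral_map, average]

end UniformMeasures

section SmoothedGradient

theorem hasFDerivAt_setIntegral_comp_add {α E F : Type*} [TopologicalSpace α]
    [T2Space α] [MeasurableSpace α] [BorelSpace α] [NormedAddCommGroup E] [NormedSpace ℝ E]
    [FiniteDimensional ℝ E] [NormedAddCommGroup F] [NormedSpace ℝ F]
    {ν : Measure α} [IsFiniteMeasureOnCompacts ν] {K : Set α} (hK : IsCompact K) {φ : α → E}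
    (hφ : Continuous φ) {f : E → F} (hf : ContDiff ℝ 1 f) (x : E) :
    HasFDerivAt (fun y ↦ ∫ u in K, f (y + φ u) ∂ν) (∫ u in K, fderiv ℝ f (x + φ u) ∂ν) x := by
  have hf' := hf.continuous_fderiv one_ne_zero
  obtain ⟨C, hC⟩ := ((isCompact_closedBall x 1).prod hK).exists_bound_of_continuousOn
    (f := fun p : E × α ↦ fderiv ℝ f (p.1 + φ p.2)) (by fun_prop)
  have continuous_comp : ∀ y, Continuous fun u ↦ f (y + φ u) := fun y ↦
    hf.continuous.comp (by fun_prop)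
  have continuous_fderiv_comp : Continuous fun u ↦ fderiv ℝ f (x + φ u) :=
    hf'.comp (by fun_prop)
  refine hasFDerivAt_integral_of_dominated_of_fderiv_le (bound := fun _ ↦ C)
    (F' := fun y u ↦ fderiv ℝ f (y + φ u)) (closedBall_mem_nhds x one_pos)
    (.of_forall fun y ↦ ((continuous_comp y).continuousOn.integrableOn_compact hK).1)
    ((continuous_comp x).continuousOn.integrableOn_compact hK)
    (continuous_fderiv_comp.continuousOn.integrableOn_compact hK).1
    ?_ (integrableOn_const hK.measure_lt_top.ne)
    (.of_forall fun u y _ ↦ ?_)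
  · filter_upwards [ae_restrict_mem hK.measurableSet] with u hu y hy using hC (y, u) ⟨hy, hu⟩
  · exact (hasFDerivAt_comp_add_right (φ u)).2 (hf.differentiable one_ne_zero _).hasFDerivAt

theorem gradient_comp_add_smul_sub_const {E : Type*} [NormedAddCommGroup E]
    [InnerProductSpace ℝ E] [CompleteSpace E] (f : E → ℝ) (δ c : ℝ) (x u : E) :
    gradient (fun w ↦ f (x + δ • w) - c) u = δ • gradient f (x + δ • u) := by
  simp only [gradient, fderiv_sub_const, fderiv_comp_smul (f := fun w ↦ f (x + w)),
    fderiv_comp_add_left, map_smul]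

variable {E : Type*} [NormedAddCommGroup E] [InnerProductSpace ℝ E] [FiniteDimensional ℝ E]
  [MeasurableSpace E] [BorelSpace E] (μ : Measure E) [μ.IsAddHaarMeasure]

theorem hasGradientAt_average_closedBall_comp_add_smul {f : E → ℝ} (hf : ContDiff ℝ 1 f) (δ : ℝ)
    (x : E) :
    HasGradientAt (fun y ↦ ⨍ u in closedBall 0 1, f (y + δ • u) ∂μ)
      (⨍ u in closedBall 0 1, gradient f (x + δ • u) ∂μ) x := by
  have hfderiv : IntegrableOn (fun u ↦ fderiv ℝ f (x + δ • u)) (closedBall 0 1) μ :=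
    ((hf.continuous_fderiv one_ne_zero).comp (by fun_prop)).continuousOn.integrableOn_compact
      (isCompact_closedBall 0 1)
  have hgradient : IntegrableOn (fun u ↦ gradient f (x + δ • u)) (closedBall 0 1) μ :=
    (InnerProductSpace.toDual ℝ E).symm.toContinuousLinearEquiv.integrable_comp_iff.2 hfderiv
  have h := (hasFDerivAt_setIntegral_comp_add (ν := μ) (isCompact_closedBall (0 : E) 1)
    (φ := fun u ↦ δ • u) (by fun_prop) hf x).const_smul (μ.real (closedBall (0 : E) 1))⁻¹
  have toDual_integral_gradient :
      InnerProductSpace.toDual ℝ E (∫ u in closedBall 0 1, gradient f (x + δ • u) ∂μ) =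
        ∫ u in closedBall 0 1, fderiv ℝ f (x + δ • u) ∂μ := by
    ext e
    rw [InnerProductSpace.toDual_apply_apply, real_inner_comm, ← integral_inner hgradient,
      ContinuousLinearMap.integral_apply hfderiv]
    simp only [inner_gradient_right, conj_trivial]
  simp only [setAverage_eq, hasGradientAt_iff_hasFDerivAt, map_smul, toDual_integral_gradient]
  exact h

theorem smoothed_gradient_sphere_representation_general [Nontrivial E] {f : E → ℝ}
    (hf : ContDiff ℝ 1 f) {δ : ℝ} (hδ : δ ≠ 0) (x : E) :
    HasGradientAt (fun y ↦ ⨍ u in closedBall 0 1, f (y + δ • u) ∂μ)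
      (⨍ v, ((finrank ℝ E / δ) * (f (x + δ • (v : E)) - f x)) • (v : E) ∂μ.toSphere) x := by
  have hball := average_closedBall_gradient_eq_average_toSphere μ
    (g := fun u ↦ f (x + δ • u) - f x) (by fun_prop)
  have hestimator :
      ⨍ v, ((finrank ℝ E / δ) * (f (x + δ • (v : E)) - f x)) • (v : E) ∂μ.toSphere =
        ⨍ u in closedBall 0 1, gradient f (x + δ • u) ∂μ := by
    calc _ = δ⁻¹ • ⨍ v, (finrank ℝ E * (f (x + δ • (v : E)) - f x)) • (v : E) ∂μ.toSphere := by
          simp only [average, ← integral_smul, smul_smul, div_eq_inv_mul, mul_assoc]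
      _ = δ⁻¹ • ⨍ u in closedBall 0 1, δ • gradient f (x + δ • u) ∂μ := by
          simp only [← hball, gradient_comp_add_smul_sub_const]
      _ = _ := by
          rw [average, integral_smul, inv_smul_smul₀ hδ, average]
  exact hestimator ▸ hasGradientAt_average_closedBall_comp_add_smul μ hf δ x

end SmoothedGradient

/-- The gradient of the ball-smoothed function equals the expectation of the single-sample
zeroth-order (sphere-sampling) estimator: `∇f_μ(x) = E_v[(d/μ)(f(x+μv) − f(x)) v]`. -/
theorem smoothed_gradient_sphere_representation
    (d : ℕ) (hd : 1 ≤ d)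
    (f : EuclideanSpace ℝ (Fin d) → ℝ) (hf : ContDiff ℝ 1 f)
    (L : ℝ)
    (hlip : ∀ x₁ x₂, ‖gradient f x₁ - gradient f x₂‖ ≤ L * ‖x₁ - x₂‖)
    (μ : ℝ) (hμ : 0 < μ) :
    Differentiable ℝ (fun x => ∫ u, f (x + μ • u) ∂(ballUniform d)) ∧
    ∀ x, gradient (fun x' => ∫ u, f (x' + μ • u) ∂(ballUniform d)) x =
      ∫ v, (((d : ℝ) / μ) * (f (x + μ • v) - f x)) • v ∂(sphereUniform d) := by
  have : NeZero d := ⟨Nat.one_le_iff_ne_zero.1 hd⟩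
  have hgrad := smoothed_gradient_sphere_representation_general volume hf hμ.ne'
  simp only [finrank_euclideanSpace_fin] at hgrad
  simp only [integral_ballUniform, integral_sphereUniform]
  exact ⟨fun x ↦ (hgrad x).differentiableAt, fun x ↦ (hgrad x).gradient⟩
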